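/- For every integer α ≥ 1, the Laurent series L_{2α−1} (in the d_3 tower) satisfies L_{2α−1} = q^2 · (J_7^{10}/J_14^3) · ∑_{n≥0} d_3(7^{2α−1}·n + λ_{2α−1})·q^n, where λ_β = (5·7^β + 1)/6. -/

import Mathlib

noncomputable section

/-- `J b = ∏_{k=1}^∞ (1 - q^{b·k})` as a formal power series with integer coefficients. -/
def J (b : ℕ) : PowerSeries ℤ :=
  PowerSeries.mk fun n =>
    PowerSeries.coeff (R := ℤ) n
      (∏ k ∈ Finset.range (n + 1), (1 - (PowerSeries.X : PowerSeries ℤ) ^ (b * (k + 1))))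

/-!
Let `F` be the generating function of `d`, let `G = F⁻¹`, and write `P_β` for the generating
function of `n ↦ d (m ^ β * n + λ_β)`, where `λ_β = ((m - 2) * m ^ β + 1) / (m - 1)`. Then
`A = q ^ (m + 1) * F(q) * G(q ^ (m ^ 2))`, and the tower is given in closed form by
`L_{2β+1} = q ^ 2 * G(q ^ m) * P_{2β+1}` and `L_{2β+2} = q * G(q) * P_{2β+2}`. Indeed `U_m` pulls
out a factor in `q ^ m`, the factor `F` in `A` cancels the `G` in `L_{2β+2}`, and
`λ_{β+1} = λ_β + (m - 2) * m ^ β` says that `U_m` sends `q ^ e * P_β` to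
`q ^ c * P_{β+1}` whenever `e + (m - 2) = m * c`. The tower of `d₃` is the case `m = 7`.
-/

section PowerSeriesTower

open PowerSeries

section Contract

variable {R : Type*} {m : ℕ}

/-- The operator `U_m` on power series, which keeps the coefficients whose index is a multiple of
`m`; the analogue of `Polynomial.contract`. -/
def contract [Semiring R] (m : ℕ) (f : R⟦X⟧) : R⟦X⟧ :=
  mk fun n ↦ coeff (m * n) f

lemma contract_expand_mul [CommRing R] (hm : m ≠ 0) (f g : R⟦X⟧) :
    contract m (expand m hm g * f) = g * contract m f := by
  ext n
  simp only [contract, coeff_mk, coeff_mul]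
  symm
  refine Finset.sum_of_injOn (fun p : ℕ × ℕ ↦ (m * p.1, m * p.2)) ?injective ?maps_to
    ?vanishes_off_image ?terms_agree
  case injective =>
    rintro ⟨i, j⟩ - ⟨k, l⟩ - h
    simpa [hm] using h
  case maps_to =>
    rintro ⟨i, j⟩ hij
    simp only [Finset.mem_coe, Finset.HasAntidiagonal.mem_antidiagonal] at hij ⊢
    rw [← hij, mul_add]
  case vanishes_off_image =>
    rintro ⟨i, j⟩ hij hnot
    rw [Finset.HasAntidiagonal.mem_antidiagonal] at hij
    suffices ¬ m ∣ i by rw [coeff_expand_of_not_dvd m hm g this, zero_mul]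
    rintro ⟨k, rfl⟩
    obtain ⟨l, rfl⟩ : m ∣ j := (Nat.dvd_add_right ⟨k, rfl⟩).mp ⟨n, hij⟩
    refine hnot ⟨(k, l), ?_, rfl⟩
    simpa [← mul_add, hm] using hij
  case terms_agree =>
    rintro ⟨i, j⟩ -
    rw [coeff_expand_mul]

lemma contract_X_pow_mul_mk [Semiring R] {e c r : ℕ} (hr : r < m) (h : e + r = m * c) (d : ℕ → R) :
    contract m (X ^ e * mk d) = X ^ c * mk fun n ↦ d (m * n + r) := by
  ext n
  simp only [contract, coeff_mk, coeff_X_pow_mul']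
  rcases le_or_gt c n with hcn | hnc
  · have hmul : m * n = m * c + m * (n - c) := by rw [← mul_add, Nat.add_sub_cancel' hcn]
    rw [if_pos hcn, if_pos (by omega)]
    congr 1
    omega
  · have hmul : m * n + m ≤ m * c := Nat.mul_le_mul_left m (Nat.succ_le_of_lt hnc)
    rw [if_neg (by omega), if_neg (by omega)]

lemma apply_ofPowerSeries_eq_contract [Semiring R] (hm : m ≠ 0)
    {U : LaurentSeries R → LaurentSeries R} (hU : ∀ f n, (U f).coeff n = f.coeff (m * n))
    (f : R⟦X⟧) :
    U (HahnSeries.ofPowerSeries ℤ R f) = HahnSeries.ofPowerSeries ℤ R (contract m f) := by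
  ext n
  rw [hU]
  rcases lt_or_ge n 0 with hn | hn
  · have hmn : (m : ℤ) * n < 0 := mul_neg_of_pos_of_neg (by positivity) hn
    rw [PowerSeries.coeff_coe, PowerSeries.coeff_coe, if_pos hmn, if_pos hn]
  · lift n to ℕ using hn
    rw [← Nat.cast_mul, LaurentSeries.coeff_coe_powerSeries, LaurentSeries.coeff_coe_powerSeries,
      contract, coeff_mk]

end Contract

section EulerProduct

variable {b : ℕ}

lemma coeff_prod_one_sub_X_pow_eq_coeff_J (hb : b ≠ 0) {n N : ℕ} (hN : n < N) :
    coeff n (∏ k ∈ Finset.range N, (1 - (X : ℤ⟦X⟧) ^ (b * (k + 1)))) = coeff n (J b) := by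
  induction N, Nat.succ_le_of_lt hN using Nat.le_induction with
  | base => rw [J, coeff_mk]
  | succ N hnN ih =>
    have horder : (n : ℕ∞) < (X ^ (b * (N + 1)) : ℤ⟦X⟧).order := by
      rw [order_X_pow, Nat.cast_lt]
      exact hnN.trans (N.le_succ.trans (Nat.le_mul_of_pos_left _ (Nat.pos_of_ne_zero hb)))
    rw [Finset.prod_range_succ, coeff_mul_one_sub_of_lt_order n horder, ih hnN]

lemma expand_J {m : ℕ} (hm : m ≠ 0) (hb : b ≠ 0) : expand m hm (J b) = J (m * b) := by
  ext n
  have hprod : ∏ k ∈ Finset.range (n + 1), (1 - (X : ℤ⟦X⟧) ^ (m * b * (k + 1))) =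
      expand m hm (∏ k ∈ Finset.range (n + 1), (1 - (X : ℤ⟦X⟧) ^ (b * (k + 1)))) := by
    simp only [map_prod, map_sub, map_one, map_pow, expand_X, ← pow_mul, mul_assoc]
  rw [← coeff_prod_one_sub_X_pow_eq_coeff_J (mul_ne_zero hm hb) n.lt_succ_self, hprod,
    coeff_expand, coeff_expand]
  split_ifs
  · rw [coeff_prod_one_sub_X_pow_eq_coeff_J hb (Nat.lt_succ_of_le (n.div_le_self m))]
  · rfl

lemma isUnit_J (hb : b ≠ 0) : IsUnit (J b) := by
  rw [isUnit_iff_constantCoeff, ← coeff_zero_eq_constantCoeff_apply,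
    ← coeff_prod_one_sub_X_pow_eq_coeff_J hb zero_lt_one]
  simp [hb]

end EulerProduct

section Progression

variable {R : Type*} {m : ℕ}

/-- The offset `λ_β` of the progression of step `m ^ β`. The division is exact; the subtractions
are meaningful only for `2 ≤ m`. -/
def progressionOffset (m β : ℕ) : ℕ :=
  ((m - 2) * m ^ β + 1) / (m - 1)

/-- The generating function `∑ d (m ^ β * n + λ_β) * q ^ n` of `d` along the progression of step
`m ^ β` and offset `λ_β`. -/
def progressionSeries [Semiring R] (m : ℕ) (d : ℕ → R) (β : ℕ) : R⟦X⟧ :=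
  mk fun n ↦ d (m ^ β * n + progressionOffset m β)

lemma progressionOffset_zero (hm : 2 ≤ m) : progressionOffset m 0 = 1 := by
  rw [progressionOffset, pow_zero, mul_one, show m - 2 + 1 = m - 1 by omega]
  exact Nat.div_self (by omega)

lemma progressionOffset_succ (hm : 2 ≤ m) (β : ℕ) :
    progressionOffset m (β + 1) = (m - 2) * m ^ β + progressionOffset m β := by
  obtain ⟨s, rfl⟩ := Nat.exists_eq_add_of_le' hm
  simp only [progressionOffset, Nat.add_sub_cancel, show s + 2 - 1 = s + 1 from rfl]
  rw [← Nat.mul_add_div (Nat.add_one_pos s)]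
  congr 1
  ring

lemma contract_X_pow_mul_progressionSeries [Semiring R] (hm : 2 ≤ m) {e c : ℕ}
    (h : e + (m - 2) = m * c) (d : ℕ → R) (β : ℕ) :
    contract m (X ^ e * progressionSeries m d β) = X ^ c * progressionSeries m d (β + 1) := by
  rw [progressionSeries, contract_X_pow_mul_mk (by omega) h]
  simp only [progressionSeries, progressionOffset_succ hm]
  congr! 4
  ring

lemma contract_X_pow_succ_mul_mk [Semiring R] (hm : 2 ≤ m) (d : ℕ → R) :
    contract m (X ^ (m + 1) * mk d) = X ^ 2 * progressionSeries m d 1 := by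
  rw [contract_X_pow_mul_mk (r := m - 1) (c := 2) (by omega) (by omega)]
  simp only [progressionSeries, progressionOffset_succ hm, progressionOffset_zero hm]
  congr! 4
  rw [pow_one, pow_zero]
  omega

end Progression

section Tower

variable {R : Type*} [CommRing R] {m : ℕ} {d : ℕ → R} {G : R⟦X⟧}

/-- The closed form `q ^ 2 * G(q ^ m) * ∑ d (m ^ β * n + λ_β) * q ^ n` of the term of odd index
`β` of the tower. -/
def oddTerm (hm : 2 ≤ m) (G : R⟦X⟧) (d : ℕ → R) (β : ℕ) : R⟦X⟧ :=
  expand m (by omega) G * (X ^ 2 * progressionSeries m d β)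

/-- The closed form `q * G(q) * ∑ d (m ^ β * n + λ_β) * q ^ n` of the term of positive even index
`β` of the tower. -/
def evenTerm (m : ℕ) (G : R⟦X⟧) (d : ℕ → R) (β : ℕ) : R⟦X⟧ :=
  G * (X * progressionSeries m d β)

/-- The multiplier `A = q ^ (m + 1) * F(q) * G(q ^ (m ^ 2))` of the tower, where `F` is the
generating function of `d`. -/
def towerMultiplier (hm : 2 ≤ m) (G : R⟦X⟧) (d : ℕ → R) : R⟦X⟧ :=
  expand m (by omega) (expand m (by omega) G) * (X ^ (m + 1) * mk d)

lemma contract_towerMultiplier (hm : 2 ≤ m) :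
    contract m (towerMultiplier hm G d) = oddTerm hm G d 1 := by
  rw [towerMultiplier, contract_expand_mul, contract_X_pow_succ_mul_mk hm, oddTerm]

lemma contract_oddTerm (hm : 2 ≤ m) (β : ℕ) :
    contract m (oddTerm hm G d β) = evenTerm m G d (β + 1) := by
  rw [oddTerm, contract_expand_mul, evenTerm,
    contract_X_pow_mul_progressionSeries hm (c := 1) (by omega), pow_one]

lemma contract_towerMultiplier_mul_evenTerm (hm : 2 ≤ m) (hG : mk d * G = 1) (β : ℕ) :
    contract m (towerMultiplier hm G d * evenTerm m G d β) = oddTerm hm G d (β + 1) := by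
  have hm0 : m ≠ 0 := by omega
  have hcancel : towerMultiplier hm G d * evenTerm m G d β =
      expand m hm0 (expand m hm0 G) * (X ^ (m + 2) * progressionSeries m d β) := by
    rw [towerMultiplier, evenTerm]
    linear_combination
      expand m hm0 (expand m hm0 G) * X ^ (m + 2) * progressionSeries m d β * hG
  rw [hcancel, contract_expand_mul,
    contract_X_pow_mul_progressionSeries hm (c := 2) (by omega), oddTerm]

theorem tower_odd_eq_ofPowerSeries_oddTerm (hm : 2 ≤ m) (hG : mk d * G = 1)
    {U : LaurentSeries R → LaurentSeries R} (hU : ∀ f n, (U f).coeff n = f.coeff (m * n))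
    {L : ℕ → LaurentSeries R} (hL0 : L 0 = 1)
    (hLodd : ∀ β, L (2 * β + 1) =
      U (HahnSeries.ofPowerSeries ℤ R (towerMultiplier hm G d) * L (2 * β)))
    (hLeven : ∀ β, L (2 * β + 2) = U (L (2 * β + 1))) (β : ℕ) :
    L (2 * β + 1) = HahnSeries.ofPowerSeries ℤ R (oddTerm hm G d (2 * β + 1)) := by
  have hU_coe := apply_ofPowerSeries_eq_contract (m := m) (by omega) hU
  induction β with
  | zero => rw [hLodd, mul_zero, hL0, mul_one, hU_coe, contract_towerMultiplier hm]
  | succ β ih =>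
    have heven : L (2 * (β + 1)) =
        HahnSeries.ofPowerSeries ℤ R (evenTerm m G d (2 * (β + 1))) := by
      rw [mul_add_one, hLeven, ih, hU_coe, contract_oddTerm hm]
    rw [hLodd, heven, ← map_mul, hU_coe, contract_towerMultiplier_mul_evenTerm hm hG]

end Tower

section EtaQuotient

variable {m a b r s : ℕ} {d : ℕ → ℤ} {G : ℤ⟦X⟧}

lemma mk_mul_eq_one_of_J_pow_eq (hb : b ≠ 0) (hd : mk d * J a ^ r = J b ^ s)
    (hG : J a ^ r = J b ^ s * G) : mk d * G = 1 := by
  refine mul_left_cancel₀ ((isUnit_J hb).pow s).ne_zero ?_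
  linear_combination hd - mk d * hG

lemma J_mul_pow_eq_mul_expand (hm : m ≠ 0) (ha : a ≠ 0) (hb : b ≠ 0) (hG : J a ^ r = J b ^ s * G) :
    J (m * a) ^ r = J (m * b) ^ s * expand m hm G := by
  rw [← expand_J hm ha, ← expand_J hm hb, ← map_pow, hG, map_mul, map_pow]

lemma eq_ofPowerSeries_towerMultiplier (hm : 2 ≤ m) (ha : a ≠ 0) (hb : b ≠ 0)
    (hd : mk d * J a ^ r = J b ^ s) (hG : J a ^ r = J b ^ s * G) {A : LaurentSeries ℤ}
    (hA : A * HahnSeries.ofPowerSeries ℤ ℤ (J a ^ r * J (m * (m * b)) ^ s) =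
      HahnSeries.ofPowerSeries ℤ ℤ (X ^ (m + 1) * J b ^ s * J (m * (m * a)) ^ r)) :
    A = HahnSeries.ofPowerSeries ℤ ℤ (towerMultiplier hm G d) := by
  have hm0 : m ≠ 0 := by omega
  have hdenom : IsUnit (J a ^ r * J (m * (m * b)) ^ s) :=
    ((isUnit_J ha).pow r).mul ((isUnit_J (mul_ne_zero hm0 (mul_ne_zero hm0 hb))).pow s)
  have hGG : J (m * (m * a)) ^ r = J (m * (m * b)) ^ s * expand m hm0 (expand m hm0 G) :=
    J_mul_pow_eq_mul_expand hm0 (mul_ne_zero hm0 ha) (mul_ne_zero hm0 hb)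
      (J_mul_pow_eq_mul_expand hm0 ha hb hG)
  refine (hdenom.map (HahnSeries.ofPowerSeries ℤ ℤ)).mul_right_cancel ?_
  rw [hA, ← map_mul, towerMultiplier, hGG, ← hd]
  congr 1
  ring

end EtaQuotient

theorem stmt9_general {m : ℕ} (hm : 2 ≤ m) {a b : ℕ} (ha : a ≠ 0) (hb : b ≠ 0) {r s : ℕ}
    {d : ℕ → ℤ} (hd : mk d * J a ^ r = J b ^ s)
    {U : LaurentSeries ℤ → LaurentSeries ℤ} (hU : ∀ f n, (U f).coeff n = f.coeff (m * n))
    {A : LaurentSeries ℤ}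
    (hA : A * HahnSeries.ofPowerSeries ℤ ℤ (J a ^ r * J (m * (m * b)) ^ s) =
      HahnSeries.ofPowerSeries ℤ ℤ (X ^ (m + 1) * J b ^ s * J (m * (m * a)) ^ r))
    {L : ℕ → LaurentSeries ℤ} (hL0 : L 0 = 1)
    (hLodd : ∀ β, L (2 * β + 1) = U (A * L (2 * β)))
    (hLeven : ∀ β, L (2 * β + 2) = U (L (2 * β + 1))) (β : ℕ) :
    L (2 * β + 1) * HahnSeries.ofPowerSeries ℤ ℤ (J (m * b) ^ s) =
      HahnSeries.ofPowerSeries ℤ ℤ (X ^ 2 * J (m * a) ^ r *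
        mk fun n ↦ d (m ^ (2 * β + 1) * n + ((m - 2) * m ^ (2 * β + 1) + 1) / (m - 1))) := by
  have hm0 : m ≠ 0 := by omega
  obtain ⟨G, hG⟩ : J b ^ s ∣ J a ^ r := ((isUnit_J hb).pow s).dvd
  have hdG : mk d * G = 1 := mk_mul_eq_one_of_J_pow_eq hb hd hG
  rw [eq_ofPowerSeries_towerMultiplier hm ha hb hd hG hA] at hLodd
  rw [tower_odd_eq_ofPowerSeries_oddTerm hm hdG hU hL0 hLodd hLeven, ← map_mul,
    J_mul_pow_eq_mul_expand hm0 ha hb hG]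
  simp only [oddTerm, progressionSeries, progressionOffset]
  congr 1
  ring

end PowerSeriesTower

/-- in the d₃ tower (`A₃ = q^8·J_2^3·J_49^{10}/(J_1^{10}·J_98^3)`, `L_0 = 1`,
`L_{2β+1} = U_7(A₃·L_{2β})`, `L_{2β+2} = U_7(L_{2β+1})`), for every `α ≥ 1`:
`L_{2α−1} = q^2·(J_7^{10}/J_14^3)·∑_{n≥0} d_3(7^{2α−1}·n + λ_{2α−1})·qⁿ`, with
`λ_β = (5·7^β+1)/6`; stated multiplied through by the invertible series `J_14^3`. -/
theorem stmt9
    (d3 : ℕ → ℤ) (hd : PowerSeries.mk d3 * (J 1) ^ 10 = (J 2) ^ 3)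
    (U : LaurentSeries ℤ → LaurentSeries ℤ)
    (hU : ∀ (f : LaurentSeries ℤ) (n : ℤ), (U f).coeff n = f.coeff (7 * n))
    (A3 : LaurentSeries ℤ)
    (hA3 : A3 * HahnSeries.ofPowerSeries ℤ ℤ ((J 1) ^ 10 * (J 98) ^ 3)
        = HahnSeries.ofPowerSeries ℤ ℤ (PowerSeries.X ^ 8 * (J 2) ^ 3 * (J 49) ^ 10))
    (L : ℕ → LaurentSeries ℤ) (hL0 : L 0 = 1)
    (hLodd : ∀ β : ℕ, L (2 * β + 1) = U (A3 * L (2 * β)))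
    (hLeven : ∀ β : ℕ, L (2 * β + 2) = U (L (2 * β + 1)))
    (α : ℕ) (hα : 1 ≤ α) :
    L (2 * α - 1) * HahnSeries.ofPowerSeries ℤ ℤ ((J 14) ^ 3)
      = HahnSeries.ofPowerSeries ℤ ℤ
          (PowerSeries.X ^ 2 * (J 7) ^ 10 *
            PowerSeries.mk fun n =>
              d3 (7 ^ (2 * α - 1) * n + (5 * 7 ^ (2 * α - 1) + 1) / 6)) := by
  obtain ⟨β, rfl⟩ := Nat.exists_eq_add_of_le' hα
  exact stmt9_general (m := 7) (by norm_num) one_ne_zero two_ne_zero hd hU hA3 hL0 hLodd hLeven β
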